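/- arXiv:2307.03321 — 4 statements merged into one kernel-verified Lean document; each statement's English description precedes it below -/
import Mathlib

section
/- Let ρ be a density matrix, i.e., a positive semidefinite complex matrix indexed by a finite type with trace 1. Then for every n ≥ 0, the n-th Taylor coefficient of the function u ↦ det(1 - u•ρ)⁻¹ at u = 0 equals Z_n(ρ); that is, (1/n!)·(d^n/du^n)[det(1 - u•ρ)⁻¹]_{u=0} = Z_n(ρ). -/
/-!
Let `λ_i` be the eigenvalues of `ρ` and `p_k = tr(ρ^k) = ∑ i, λ_i ^ k`. Near `0`,
`det(1 - uρ)⁻¹ = ∏ i, (1 - λ_i u)⁻¹`, so the Taylor series in question is the formal power series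
`A = ∏ i, ∑ m, λ_i ^ m X ^ m` (`taylorZero_inv_prod`). On the other side, expanding a product of
exponentials shows that `Z_n(ρ)` is the `n`-th coefficient of
`B = ∏_{k < n} exp (p_{k+1} X^{k+1} / (k+1))` (`cycleIndexCoeff_eq_coeff`).

The logarithmic derivatives of these two series are
`A' / A = ∑ i, λ_i / (1 - λ_i X) = ∑ m, p_{m+1} X^m` and `B' / B = ∑_{k < n} p_{k+1} X^k`, which
agree in all degrees below `n`. Together with `A(0) = B(0) = 1` this forces `A` and `B` to have
the same coefficients up to degree `n` (`coeff_eq_of_logDeriv`). Truncating the product `B` at `n`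
avoids any infinite product or formal logarithm.
-/


open ComplexOrder

/-- The `n`-th cycle-index coefficient of a matrix `ρ`: the cycle index polynomial of the
symmetric group `S_n` evaluated at `x_k = tr(ρ^k)`, written as a sum over the partitions of `n`
encoded by multiplicities `(j_1, …, j_n)` with `j_1 + 2·j_2 + ⋯ + n·j_n = n`. -/
noncomputable def cycleIndexCoeff {ι : Type*} [Fintype ι] [DecidableEq ι]
    (ρ : Matrix ι ι ℂ) (n : ℕ) : ℂ :=
  ∑ j ∈ Finset.univ.filter
      (fun j : Fin n → Fin (n + 1) => ∑ k : Fin n, (k.1 + 1) * (j k).1 = n),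
    ∏ k : Fin n,
      (ρ ^ (k.1 + 1)).trace ^ (j k).1 /
        (((k.1 + 1) ^ (j k).1 * Nat.factorial (j k).1 : ℕ) : ℂ)

open PowerSeries in
/-- The logarithmic derivative of a finite product is the sum of the logarithmic derivatives, stated
without division. -/
theorem prod_logDeriv {κ : Type*} (s : Finset κ) (f g : κ → ℂ⟦X⟧)
    (h : ∀ i ∈ s, d⁄dX ℂ (f i) = g i * f i) :
    d⁄dX ℂ (∏ i ∈ s, f i) = (∑ i ∈ s, g i) * ∏ i ∈ s, f i := by
  classical
  induction s using Finset.induction_on with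
  | empty => simp
  | insert a s ha ih =>
    rw [Finset.prod_insert ha, Finset.sum_insert ha, Derivation.leibniz,
      ih fun i hi => h i (Finset.mem_insert_of_mem hi), h a (Finset.mem_insert_self _ _)]
    simp only [smul_eq_mul]
    ring

open PowerSeries in
/-- Two power series with the same constant coefficient, whose logarithmic derivatives agree below
degree `n`, agree up to degree `n`: the equation `A' = S * A` determines the coefficient of
`X ^ (m + 1)` in `A` from those of degree at most `m` in `S` and `A`. -/
theorem coeff_eq_of_logDeriv {A B S R : ℂ⟦X⟧} {n : ℕ}
    (hA : d⁄dX ℂ A = S * A) (hB : d⁄dX ℂ B = R * B) (h0 : coeff 0 A = coeff 0 B)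
    (hSR : ∀ m < n, coeff m S = coeff m R) : ∀ m ≤ n, coeff m A = coeff m B := by
  intro m
  induction m using Nat.strong_induction_on with
  | _ m ih =>
    intro hm
    rcases m with _ | m
    · exact h0
    · have h1 := congrArg (coeff m) hA
      have h2 := congrArg (coeff m) hB
      rw [coeff_derivative, coeff_mul] at h1 h2
      have h3 : (m : ℂ) + 1 ≠ 0 := Nat.cast_add_one_ne_zero m
      apply mul_right_cancel₀ h3
      rw [h1, h2]
      refine Finset.sum_congr rfl fun p hp => ?_
      have := Finset.HasAntidiagonal.mem_antidiagonal.1 hp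
      rw [hSR p.1 (by omega), ih p.2 (by omega) (by omega)]

open PowerSeries in
theorem geom_mul (l : ℂ) : (mk fun n => l ^ n) * (1 - C l * X) = 1 := by
  ext n
  rw [mul_sub, mul_one, ← mul_assoc, mul_comm _ (C l)]
  rcases n with _ | n
  · simp
  · simp [mul_assoc, coeff_succ_mul_X, coeff_one, pow_succ']

open PowerSeries in
theorem derivative_geom (l : ℂ) :
    d⁄dX ℂ (mk fun n => l ^ n) = (C l * mk fun n => l ^ n) * (mk fun n => l ^ n) := by
  have h := congrArg (d⁄dX ℂ) (geom_mul l)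
  simp only [Derivation.leibniz, smul_eq_mul, map_sub, derivative_one, derivative_C,
    derivative_X] at h
  linear_combination (mk fun n => l ^ n) * h - d⁄dX ℂ (mk fun n => l ^ n) * geom_mul l

open PowerSeries in
/-- The formal power series `exp (x * X ^ (k + 1) / (k + 1))`, given by its coefficients: with
`q = m / (k + 1)`, the coefficient of `X ^ m` is `x ^ q / ((k + 1) ^ q * q!)` if `k + 1 ∣ m`, and
`0` otherwise. -/
noncomputable def cycleExp (x : ℂ) (k : ℕ) : ℂ⟦X⟧ :=
  mk fun m => if (k + 1) ∣ m then
    x ^ (m / (k + 1)) / (((k + 1) ^ (m / (k + 1)) * Nat.factorial (m / (k + 1)) : ℕ) : ℂ) else 0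

open PowerSeries in
theorem derivative_cycleExp (x : ℂ) (k : ℕ) :
    d⁄dX ℂ (cycleExp x k) = (C x * X ^ k) * cycleExp x k := by
  ext m
  rw [coeff_derivative, mul_assoc, coeff_C_mul, coeff_X_pow_mul', cycleExp, coeff_mk, coeff_mk]
  by_cases hk : k ≤ m
  · obtain ⟨r, rfl⟩ := Nat.exists_eq_add_of_le hk
    have e : k + r + 1 = r + (k + 1) := by ring
    rw [if_pos hk, Nat.add_sub_cancel_left, e]
    simp only [Nat.dvd_add_self_right]
    split_ifs with hd
    · obtain ⟨q, rfl⟩ := hd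
      have h1 : ((k + 1) * q + (k + 1)) / (k + 1) = q + 1 := by
        rw [← Nat.mul_succ, Nat.mul_div_cancel_left _ (Nat.succ_pos k)]
      rw [h1, Nat.mul_div_cancel_left _ (Nat.succ_pos k), Nat.factorial_succ]
      have h2 : (k : ℂ) + 1 ≠ 0 := Nat.cast_add_one_ne_zero k
      have h3 : (q : ℂ) + 1 ≠ 0 := Nat.cast_add_one_ne_zero q
      have h4 : (Nat.factorial q : ℂ) ≠ 0 := Nat.cast_ne_zero.2 (Nat.factorial_ne_zero q)
      push_cast
      field_simp
      ring
    · simp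
  · rw [if_neg hk, if_neg, zero_mul, mul_zero]
    exact fun h => hk (by have := Nat.le_of_dvd (Nat.succ_pos m) h; omega)

open PowerSeries in
/-- `Z_n(ρ)` is the `n`-th coefficient of `∏_{k < n} exp (tr(ρ^{k+1}) X^{k+1} / (k+1))`: a
multiplicity vector `j` corresponds to taking the term of degree `(k + 1) * j k` in the `k`-th
factor. -/
theorem cycleIndexCoeff_eq_coeff {ι : Type*} [Fintype ι] [DecidableEq ι]
    (ρ : Matrix ι ι ℂ) (n : ℕ) :
    cycleIndexCoeff ρ n = coeff n (∏ k : Fin n, cycleExp (ρ ^ (k.1 + 1)).trace k.1) := by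
  rw [coeff_prod, cycleIndexCoeff]
  simp only [cycleExp, coeff_mk]
  have hsub : ∀ l ∈ Finset.finsuppAntidiag (Finset.univ : Finset (Fin n)) n, ∀ k, l k ≤ n := by
    intro l hl k
    rw [Finset.mem_finsuppAntidiag] at hl
    exact (Finset.single_le_sum (f := fun i => l i) (fun _ _ => Nat.zero_le _)
      (Finset.mem_univ k)).trans_eq hl.1
  refine Finset.sum_of_injOn
    (fun j : Fin n → Fin (n + 1) => Finsupp.equivFunOnFinite.symm fun k => (k.1 + 1) * (j k).1)
    ?_ ?_ ?_ ?_
  · intro a _ b _ hab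
    funext k
    have := DFunLike.congr_fun hab k
    simp only [Finsupp.equivFunOnFinite_symm_apply_apply] at this
    exact Fin.ext (Nat.eq_of_mul_eq_mul_left (Nat.succ_pos _) this)
  · intro a ha
    simpa using ha
  · -- an index outside the image has an entry not divisible by `k + 1`, so its term vanishes
    intro l hl hnot
    by_contra hne
    apply hnot
    have hd : ∀ k : Fin n, (k.1 + 1) ∣ l k := by
      intro k
      by_contra hk
      exact hne (Finset.prod_eq_zero (Finset.mem_univ k) (if_neg hk))
    refine ⟨fun k => ⟨l k / (k.1 + 1),
      Nat.lt_succ_of_le ((Nat.div_le_self _ _).trans (hsub l hl k))⟩, ?_, ?_⟩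
    · have := (Finset.mem_finsuppAntidiag.1 hl).1
      simpa [Nat.mul_div_cancel' (hd _)] using this
    · ext k
      simp [Nat.mul_div_cancel' (hd k)]
  · intro a _
    refine Finset.prod_congr rfl fun k _ => ?_
    simp [Nat.mul_div_cancel_left _ (Nat.succ_pos k.1)]

/-- The formal Taylor series of `f` at `0`. -/
noncomputable def taylorZero (f : ℂ → ℂ) : PowerSeries ℂ :=
  PowerSeries.mk fun n => iteratedDeriv n f 0 / (Nat.factorial n : ℂ)

theorem taylorZero_mul {f g : ℂ → ℂ} (hf : ∀ n : ℕ, ContDiffAt ℂ n f 0)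
    (hg : ∀ n : ℕ, ContDiffAt ℂ n g 0) :
    taylorZero (fun u => f u * g u) = taylorZero f * taylorZero g := by
  ext n
  rw [PowerSeries.coeff_mul, Finset.Nat.sum_antidiagonal_eq_sum_range_succ_mk]
  simp only [taylorZero, PowerSeries.coeff_mk]
  rw [iteratedDeriv_fun_mul (hf n) (hg n), Finset.sum_div]
  refine Finset.sum_congr rfl fun i hi => ?_
  rw [Nat.cast_choose ℂ (Nat.lt_succ_iff.1 (Finset.mem_range.1 hi))]
  have h (m : ℕ) : (Nat.factorial m : ℂ) ≠ 0 := Nat.cast_ne_zero.2 (Nat.factorial_ne_zero m)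
  have h1 := h n
  have h2 := h i
  have h3 := h (n - i)
  field_simp

theorem taylorZero_const (c : ℂ) : taylorZero (fun _ => c) = PowerSeries.C c := by
  ext n
  rcases n with _ | n <;> simp [taylorZero, iteratedDeriv_const, PowerSeries.coeff_C]

theorem taylorZero_linear (l : ℂ) :
    taylorZero (fun u => 1 - u * l) = 1 - PowerSeries.C l * PowerSeries.X := by
  have hd : deriv (fun u : ℂ => 1 - u * l) = fun _ => -l := by
    funext u
    simp
  ext n
  rcases n with _ | _ | n
  · simp [taylorZero]
  · simp [taylorZero, PowerSeries.coeff_one]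
  · simp [taylorZero, iteratedDeriv_succ', hd, PowerSeries.coeff_one, iteratedDeriv_const]

theorem taylorZero_prod_linear {κ : Type*} (s : Finset κ) (l : κ → ℂ) :
    taylorZero (fun u => ∏ i ∈ s, (1 - u * l i)) =
      ∏ i ∈ s, (1 - PowerSeries.C (l i) * PowerSeries.X) := by
  classical
  induction s using Finset.induction_on with
  | empty => simp [taylorZero_const]
  | insert a s ha ih =>
    simp only [Finset.prod_insert ha]
    rw [taylorZero_mul (fun n => by fun_prop) (fun n => by fun_prop), ih, taylorZero_linear]

theorem taylorZero_inv_prod {κ : Type*} (s : Finset κ) (l : κ → ℂ) :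
    taylorZero (fun u => (∏ i ∈ s, (1 - u * l i))⁻¹) =
      ∏ i ∈ s, PowerSeries.mk fun n => l i ^ n := by
  have hp : ∀ n : ℕ, ContDiffAt ℂ n (fun u => ∏ i ∈ s, (1 - u * l i)) 0 := fun n => by fun_prop
  have h0 : (∏ i ∈ s, (1 - (0 : ℂ) * l i)) ≠ 0 := by simp
  have h1 : taylorZero (fun u => (∏ i ∈ s, (1 - u * l i))⁻¹ * ∏ i ∈ s, (1 - u * l i)) = 1 := by
    rw [← map_one (PowerSeries.C (R := ℂ)), ← taylorZero_const]
    ext n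
    simp only [taylorZero, PowerSeries.coeff_mk]
    congr 1
    apply Filter.EventuallyEq.iteratedDeriv_eq
    filter_upwards [(hp 0).continuousAt.eventually_ne h0] with u hu
    exact inv_mul_cancel₀ hu
  have hinv : ∀ n : ℕ, ContDiffAt ℂ n (fun u => (∏ i ∈ s, (1 - u * l i))⁻¹) 0 :=
    fun n => (hp n).inv h0
  rw [taylorZero_mul hinv hp, taylorZero_prod_linear] at h1
  have h2 : (∏ i ∈ s, PowerSeries.mk fun n => l i ^ n) *
      ∏ i ∈ s, (1 - PowerSeries.C (l i) * PowerSeries.X) = 1 := by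
    rw [← Finset.prod_mul_distrib]
    exact Finset.prod_eq_one fun i _ => geom_mul (l i)
  exact left_inv_eq_right_inv h1 ((mul_comm _ _).trans h2)

/-- Power traces and `det (1 - u • ρ)` in terms of the eigenvalues of a Hermitian matrix, both
obtained by diagonalizing. -/
theorem trace_pow_and_det {ι : Type*} [Fintype ι] [DecidableEq ι]
    (ρ : Matrix ι ι ℂ) (hρ : ρ.IsHermitian) :
    (∀ k : ℕ, (ρ ^ k).trace = ∑ i, (hρ.eigenvalues i : ℂ) ^ k) ∧
    ∀ u : ℂ, (1 - u • ρ).det = ∏ i, (1 - u * (hρ.eigenvalues i : ℂ)) := by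
  set φ := Unitary.conjStarAlgAut ℂ (Matrix ι ι ℂ) hρ.eigenvectorUnitary with hφ
  set D : Matrix ι ι ℂ := Matrix.diagonal (RCLike.ofReal ∘ hρ.eigenvalues) with hD
  have hs : ρ = φ D := hρ.spectral_theorem
  have hU : (star (hρ.eigenvectorUnitary : Matrix ι ι ℂ)) * hρ.eigenvectorUnitary = 1 :=
    Unitary.coe_star_mul_self _
  have htr (M : Matrix ι ι ℂ) : (φ M).trace = M.trace := by
    rw [hφ, Unitary.conjStarAlgAut_apply, Matrix.trace_mul_comm, ← mul_assoc, hU, one_mul]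
  have hdet (M : Matrix ι ι ℂ) : (φ M).det = M.det := by
    rw [hφ, Unitary.conjStarAlgAut_apply, Matrix.det_mul_comm, ← mul_assoc, hU, one_mul]
  constructor
  · intro k
    have : ρ ^ k = φ (D ^ k) := by rw [map_pow, ← hs]
    rw [this, htr, hD, Matrix.diagonal_pow, Matrix.trace_diagonal]
    simp
  · intro u
    have : 1 - u • ρ = φ (1 - u • D) := by rw [map_sub, map_one, map_smul, ← hs]
    rw [this, hdet, hD, ← Matrix.diagonal_one, ← Matrix.diagonal_smul, Matrix.diagonal_sub,
      Matrix.det_diagonal]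
    simp

/-- For a density matrix `ρ` and any `n ≥ 0`, the `n`-th Taylor coefficient of
`u ↦ det(1 - u•ρ)⁻¹` at `u = 0` equals `Z_n(ρ)`:
`(1/n!)·(d^n/du^n)[det(1 - u•ρ)⁻¹]_{u=0} = Z_n(ρ)`. -/
theorem zeta_taylor_coeff_eq_cycle_index {ι : Type*} [Fintype ι] [DecidableEq ι]
    (ρ : Matrix ι ι ℂ) (hρ : ρ.PosSemidef) (htr : ρ.trace = 1) (n : ℕ) :
    iteratedDeriv n (fun u : ℂ => ((1 - u • ρ).det)⁻¹) 0 / (Nat.factorial n : ℂ) =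
      cycleIndexCoeff ρ n := by
  obtain ⟨htrace, hdet⟩ := trace_pow_and_det ρ hρ.isHermitian
  set l : ι → ℂ := fun i => (hρ.isHermitian.eigenvalues i : ℂ)
  have hT : iteratedDeriv n (fun u : ℂ => ((1 - u • ρ).det)⁻¹) 0 / (Nat.factorial n : ℂ) =
      PowerSeries.coeff n (∏ i, PowerSeries.mk fun m => l i ^ m) := by
    rw [← taylorZero_inv_prod]
    simp only [taylorZero, PowerSeries.coeff_mk, hdet, l]
  rw [hT, cycleIndexCoeff_eq_coeff]
  refine coeff_eq_of_logDeriv (n := n)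
    (prod_logDeriv _ _ _ fun i _ => derivative_geom (l i))
    (prod_logDeriv _ _ _ fun k _ => derivative_cycleExp _ _) ?_ ?_ n le_rfl
  · simp [cycleExp, PowerSeries.coeff_zero_eq_constantCoeff, map_prod,
      ← PowerSeries.coeff_zero_eq_constantCoeff_apply]
  -- both logarithmic derivatives have `m`-th coefficient `tr(ρ^(m+1))` for `m < n`
  · intro m hm
    simp only [map_sum, PowerSeries.coeff_C_mul, PowerSeries.coeff_mk, PowerSeries.coeff_X_pow]
    rw [Finset.sum_eq_single (⟨m, hm⟩ : Fin n)]
    · rw [if_pos rfl, mul_one, htrace]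
      simp [pow_succ', l]
    · intro k _ hk
      rw [if_neg (fun h => hk (Fin.ext h.symm)), mul_zero]
    · simp
end

section
/- Let ψ : A × B → ℂ be a bipartite pure state on finite index types A and B, i.e., ∑_{i,j} ‖ψ(i,j)‖² = 1, and let ρ_B be its reduced density matrix, defined by (ρ_B)_{j,j'} := ∑_{i ∈ A} ψ(i,j)·conj(ψ(i,j')). Then ψ is a product state (there exist vectors a : A → ℂ and b : B → ℂ with ψ(i,j) = a(i)·b(j) for all i, j) if and only if the set of singularities of ζ_{ρ_B} is exactly {1}; that is, if and only if {u : ℂ | det(1 - u•ρ_B) = 0} = {1}. -/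
/-!
Write `N` for the `B × A` matrix `N j i = ψ (i, j)`, so that `ρ = N * Nᴴ` is Hermitian with trace `1`
and has the same rank as `N`.

If `ψ (i, j) = a i * b j`, then `ρ` is a rank-one matrix `c wᵀ` with `wᵀ c = tr ρ = 1`, and
`det (1 - u • c wᵀ) = 1 - u` (Weinstein–Aronszajn).

Conversely, a nonzero eigenvalue `l` of `ρ` gives the zero `l⁻¹` of `u ↦ det (1 - u • ρ)`, hence
`l = 1`. All eigenvalues are therefore `0` or `1`, so the rank of `ρ` (the number of nonzero
eigenvalues) equals its trace, which is `1`. Thus `N` has rank one, and its columns are all multiples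
of a single vector.
-/

/-- The reduced density matrix `ρ_B = tr_A |ψ⟩⟨ψ|` of a bipartite pure state `ψ : A × B → ℂ`:
`(ρ_B)_{j,j'} = ∑_{i ∈ A} ψ(i,j)·conj(ψ(i,j'))`. -/
noncomputable def reducedDensity {A B : Type*} [Fintype A] (ψ : A × B → ℂ) :
    Matrix B B ℂ :=
  Matrix.of fun j j' => ∑ i : A, ψ (i, j) * (starRingEnd ℂ) (ψ (i, j'))

open Matrix in
lemma reducedDensity_eq_mul_conjTranspose {A B : Type*} [Fintype A] (ψ : A × B → ℂ) :
    reducedDensity ψ =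
      (Matrix.of fun (j : B) (i : A) => ψ (i, j)) *
        (Matrix.of fun (j : B) (i : A) => ψ (i, j))ᴴ := by
  ext j j'
  simp [reducedDensity, Matrix.mul_apply]

lemma trace_reducedDensity {A B : Type*} [Fintype A] [Fintype B]
    (ψ : A × B → ℂ) (hψ : ∑ p : A × B, ‖ψ p‖ ^ 2 = 1) :
    (reducedDensity ψ).trace = 1 := by
  simp only [Matrix.trace, Matrix.diag, reducedDensity, Matrix.of_apply, Complex.mul_conj']
  rw [Finset.sum_comm, ← Fintype.sum_prod_type (f := fun p : A × B => (‖ψ p‖ : ℂ) ^ 2)]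
  exact_mod_cast hψ

lemma det_one_sub_smul_vecMulVec {B : Type*} [Fintype B] [DecidableEq B]
    (u : ℂ) (c w : B → ℂ) :
    (1 - u • Matrix.vecMulVec c w).det = 1 - u * (Matrix.vecMulVec c w).trace := by
  have h : 1 - u • Matrix.vecMulVec c w = 1 + Matrix.vecMulVec (-u • c) w := by
    ext i j
    simp [Matrix.vecMulVec_apply, sub_eq_add_neg]
  rw [h, Matrix.vecMulVec_eq Unit, Matrix.det_one_add_replicateCol_mul_replicateRow,
    Matrix.trace_vecMulVec, dotProduct_smul, dotProduct_comm w c]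
  simp [sub_eq_add_neg]

/-- A Hermitian matrix whose eigenvalues all lie in `{0, 1}` has rank equal to its trace. -/
lemma rank_eq_trace_of_eigenvalues {B : Type*} [Fintype B] [DecidableEq B]
    {M : Matrix B B ℂ} (hM : M.IsHermitian)
    (h : ∀ i, hM.eigenvalues i ≠ 0 → hM.eigenvalues i = 1) : (M.rank : ℂ) = M.trace := by
  classical
  rw [hM.rank_eq_card_non_zero_eigs, hM.trace_eq_sum_eigenvalues, Fintype.card_subtype,
    Finset.card_filter, Nat.cast_sum]
  refine Finset.sum_congr rfl fun i _ => ?_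
  by_cases hi : hM.eigenvalues i = 0
  · simp [hi]
  · simp [h i hi]

lemma det_one_sub_inv_eigenvalue {B : Type*} [Fintype B] [DecidableEq B]
    {M : Matrix B B ℂ} (hM : M.IsHermitian) (i : B) (hi : hM.eigenvalues i ≠ 0) :
    (1 - ((hM.eigenvalues i : ℂ)⁻¹) • M).det = 0 := by
  rw [← Matrix.exists_mulVec_eq_zero_iff]
  refine ⟨⇑(hM.eigenvectorBasis i), ?_, ?_⟩
  · intro h0
    apply hM.eigenvectorBasis.orthonormal.ne_zero i
    ext j
    exact congrFun h0 j
  · have hc : (hM.eigenvalues i : ℂ) ≠ 0 := by exact_mod_cast hi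
    rw [Matrix.sub_mulVec, Matrix.smul_mulVec, hM.mulVec_eigenvectorBasis, Matrix.one_mulVec]
    ext j
    simp [hc]

open scoped ComplexOrder in
lemma rank_mul_conjTranspose_complex {A B : Type*} [Fintype A] [Fintype B] (N : Matrix B A ℂ) :
    (N * N.conjTranspose).rank = N.rank :=
  Matrix.rank_self_mul_conjTranspose N

lemma exists_factor_of_rank_eq_one {A B : Type*} [Fintype A] {N : Matrix B A ℂ}
    [Fintype B] (h : N.rank = 1) : ∃ (a : A → ℂ) (b : B → ℂ), ∀ i j, N j i = a i * b j := by
  classical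
  obtain ⟨v, hv⟩ := finrank_le_one_iff.mp (le_of_eq h)
  choose a ha using fun i : A => hv ⟨N.mulVecLin (Pi.single i 1), LinearMap.mem_range_self _ _⟩
  refine ⟨a, v.1, fun i j => ?_⟩
  have := congrFun (congrArg Subtype.val (ha i)) j
  simpa using this.symm

/-- A bipartite pure state `ψ` is a product state if and only if the set of
singularities of the zeta function `ζ_{ρ_B}(u) = det(1 - u•ρ_B)⁻¹`, i.e. the zero set of
`u ↦ det(1 - u•ρ_B)`, is exactly `{1}`. -/
theorem product_state_iff_zeta_singularity_one
    {A B : Type*} [Fintype A] [Fintype B] [DecidableEq B]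
    (ψ : A × B → ℂ) (hψ : ∑ p : A × B, ‖ψ p‖ ^ 2 = 1) :
    (∃ (a : A → ℂ) (b : B → ℂ), ∀ i j, ψ (i, j) = a i * b j) ↔
      {u : ℂ | (1 - u • reducedDensity ψ).det = 0} = {1} := by
  have htr := trace_reducedDensity ψ hψ
  constructor
  · rintro ⟨a, b, hab⟩
    have hρ : reducedDensity ψ = Matrix.vecMulVec b
        (fun j' => ∑ i, a i * (starRingEnd ℂ) (ψ (i, j'))) := by
      ext j j'
      simp only [reducedDensity, Matrix.of_apply, Matrix.vecMulVec_apply, Finset.mul_sum]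
      refine Finset.sum_congr rfl fun i _ => ?_
      rw [hab i j]
      ring
    ext u
    rw [Set.mem_ofPred_eq, Set.mem_singleton_iff]
    rw [hρ] at htr ⊢
    rw [det_one_sub_smul_vecMulVec, htr, mul_one, sub_eq_zero, eq_comm]
  · intro hset
    have hfac := reducedDensity_eq_mul_conjTranspose ψ
    have hH : (reducedDensity ψ).IsHermitian := by
      rw [hfac]
      exact Matrix.isHermitian_mul_conjTranspose_self _
    have hrank := rank_eq_trace_of_eigenvalues hH fun i hi => by
      have hmem : ((hH.eigenvalues i : ℂ)⁻¹) ∈ ({1} : Set ℂ) := by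
        rw [← hset]
        exact det_one_sub_inv_eigenvalue hH i hi
      exact_mod_cast inv_eq_one.mp (Set.mem_singleton_iff.mp hmem)
    rw [htr, hfac, rank_mul_conjTranspose_complex] at hrank
    exact exists_factor_of_rank_eq_one (by exact_mod_cast hrank)
end

section
/- Let ρ be a density matrix, i.e., a positive semidefinite complex matrix indexed by a finite type with trace 1. Then ρ is pure, meaning there exists a unit vector v with ρ = v·v† (equivalently tr(ρ²) = 1), if and only if Z_n(ρ) = 1 for every n ≥ 0, where Z_n is the n-th cycle-index coefficient. -/
/-!
If `ρ` is pure, then it is idempotent of trace `1`, so `tr (ρ ^ k) = 1` for all `k ≥ 1` and `Z_n(ρ)`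
is the sum over the multiplicity vectors `j` of `n` of the weights `w(j) = 1 / ∏ k ^ j_k j_k!`.
This sum is `1` (`sum_cycleWeight`): writing `c(m)` for the total weight of the vectors with
`∑ k j_k = m`, removing one part `k` turns `k j_k w(j)` into the weight of a vector of `m - k`
(`sum_mul_cycleWeight`), whence `m c(m) = c(0) + ⋯ + c(m - 1)`, and induction applies.

Conversely, only `n = 2` is needed: `Z_2(ρ) = ((tr ρ) ^ 2 + tr (ρ ^ 2)) / 2 = 1` gives
`tr (ρ ^ 2) = 1`. The eigenvalues of `ρ` are then nonnegative with sum and sum of squares `1`, so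
exactly one of them is `1` and the others vanish, and `ρ = v v†` for the corresponding column `v` of
the diagonalizing unitary (`vecMulVec_of_trace_sq`).
-/

open ComplexOrder

open Finset in
/-- A density matrix with `tr (ρ ^ 2) = 1` has exactly one nonzero eigenvalue, equal to `1`, hence
is an outer product `v v†`. -/
theorem vecMulVec_of_trace_sq {ι : Type*} [Fintype ι] [DecidableEq ι]
    (ρ : Matrix ι ι ℂ) (hρ : ρ.PosSemidef) (htr : ρ.trace = 1) (hsq : (ρ ^ 2).trace = 1) :
    ∃ v : ι → ℂ, ρ = Matrix.vecMulVec v (star v) := by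
  set l := hρ.isHermitian.eigenvalues with hl
  have hnn : ∀ i, 0 ≤ l i := hρ.eigenvalues_nonneg
  have hspec := hρ.isHermitian.spectral_theorem
  rw [Unitary.conjStarAlgAut_apply] at hspec
  set U := hρ.isHermitian.eigenvectorUnitary with hU
  have h1 : ∑ i, l i = 1 := by
    have := hρ.isHermitian.trace_eq_sum_eigenvalues
    rw [htr] at this
    rw [hl]
    refine Complex.ofReal_injective ?_
    rw [Complex.ofReal_sum, Complex.ofReal_one]
    exact this.symm
  have h2 : ∑ i, l i ^ 2 = 1 := by
    have hUU : star (U : Matrix ι ι ℂ) * (U : Matrix ι ι ℂ) = 1 := Unitary.coe_star_mul_self U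
    set D := Matrix.diagonal ((fun x : ℝ => (x : ℂ)) ∘ l) with hD
    have : ρ ^ 2 = U * (D * D) * star (U : Matrix ι ι ℂ) := by
      calc ρ ^ 2 = (U * D * star (U : Matrix ι ι ℂ)) * (U * D * star (U : Matrix ι ι ℂ)) := by
            rw [sq]; exact congrArg₂ (· * ·) hspec hspec
        _ = U * D * (star (U : Matrix ι ι ℂ) * U) * D * star (U : Matrix ι ι ℂ) := by
            simp only [Matrix.mul_assoc]
        _ = _ := by rw [hUU]; simp only [Matrix.mul_assoc, Matrix.one_mul]
    rw [this, Matrix.trace_mul_cycle, hUU, Matrix.one_mul, hD, Matrix.diagonal_mul_diagonal,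
      Matrix.trace_diagonal] at hsq
    simp only [Function.comp, ← sq] at hsq
    exact_mod_cast hsq
  have hle : ∀ i, l i ≤ 1 := fun i => h1 ▸ single_le_sum (fun j _ => hnn j) (mem_univ i)
  -- `∑ λᵢ (1 - λᵢ) = 0` with nonnegative terms, so each eigenvalue is `0` or `1`.
  have h01 : ∀ i, l i * (1 - l i) = 0 := by
    have hz : ∑ i, l i * (1 - l i) = 0 := by
      simp only [mul_sub, mul_one, ← sq, sum_sub_distrib, h1, h2, sub_self]
    intro i
    exact (sum_eq_zero_iff_of_nonneg
      (fun j _ => mul_nonneg (hnn j) (sub_nonneg.2 (hle j)))).1 hz i (mem_univ i)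
  obtain ⟨k, hk⟩ : ∃ k, l k = 1 := by
    by_contra! h
    have : ∀ i, l i = 0 := fun i => by
      rcases mul_eq_zero.1 (h01 i) with h' | h'
      · exact h'
      · exact absurd (by linarith) (h i)
    simp [this] at h1
  have hk' : ∀ i, i ≠ k → l i = 0 := by
    have hs := add_sum_erase univ l (mem_univ k)
    have hz : ∑ i ∈ univ.erase k, l i = 0 := by linarith
    intro i hi
    exact (sum_eq_zero_iff_of_nonneg (fun j _ => hnn j)).1 hz i (by simp [hi])
  refine ⟨fun i => (U : Matrix ι ι ℂ) i k, ?_⟩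
  refine hspec.trans ?_
  ext i j
  rw [Matrix.mul_apply, sum_eq_single k]
  · simp [Matrix.mul_diagonal, ← hl, hk, Matrix.vecMulVec_apply]
  · intro b _ hb
    simp [Matrix.mul_diagonal, ← hl, hk' b hb]
  · simp

/-- The multiplicity vectors `(j_1, …, j_N)`, each `j_k ≤ N`, of total weight `∑ k j_k = m`.
The index `k : Fin N` stands for the part `k + 1`. -/
def multVecs (N m : ℕ) : Finset (Fin N → ℕ) :=
  (Fintype.piFinset fun _ => Finset.range (N + 1)).filter
    fun j => ∑ k, (k.1 + 1) * j k = m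

/-- The weight `1 / ∏ k ^ j_k j_k!`, which is the proportion of permutations of `∑ k j_k` points
having `j_k` cycles of each length `k`. -/
noncomputable def cycleWeight {N : ℕ} (j : Fin N → ℕ) : ℂ :=
  ∏ k, 1 / (((k.1 + 1) ^ j k * (j k).factorial : ℕ) : ℂ)

theorem mem_multVecs {N m : ℕ} (hm : m ≤ N) (j : Fin N → ℕ) :
    j ∈ multVecs N m ↔ ∑ k, (k.1 + 1) * j k = m := by
  simp only [multVecs, Finset.mem_filter, Fintype.mem_piFinset, Finset.mem_range,
    and_iff_right_iff_imp]
  intro h k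
  have h1 : (k.1 + 1) * j k ≤ m := h ▸ Finset.single_le_sum
    (f := fun k : Fin N => (k.1 + 1) * j k) (fun _ _ => Nat.zero_le _) (Finset.mem_univ k)
  have h2 : j k ≤ (k.1 + 1) * j k := Nat.le_mul_of_pos_left _ (Nat.succ_pos _)
  omega

theorem weight_add_single {N : ℕ} (j : Fin N → ℕ) (k : Fin N) :
    ∑ i, (i.1 + 1) * (j + (Pi.single k 1 : Fin N → ℕ)) i = ∑ i, (i.1 + 1) * j i + (k.1 + 1) := by
  simp [mul_add, Finset.sum_add_distrib, Pi.single_apply]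

/-- Adding one part `k + 1` divides the weight by `(k + 1)` times the new multiplicity of that part. -/
theorem cycleWeight_add_single {N : ℕ} (j : Fin N → ℕ) (k : Fin N) :
    (((k.1 + 1) * (j + (Pi.single k 1 : Fin N → ℕ)) k : ℕ) : ℂ) * cycleWeight (j + (Pi.single k 1 : Fin N → ℕ)) =
      cycleWeight j := by
  have hrest : ∏ i ∈ Finset.univ.erase k,
      1 / (((i.1 + 1) ^ (j + (Pi.single k 1 : Fin N → ℕ)) i * ((j + (Pi.single k 1 : Fin N → ℕ)) i).factorial : ℕ) : ℂ) =
      ∏ i ∈ Finset.univ.erase k, 1 / (((i.1 + 1) ^ j i * (j i).factorial : ℕ) : ℂ) := by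
    refine Finset.prod_congr rfl fun i hi => ?_
    simp [Finset.ne_of_mem_erase hi]
  unfold cycleWeight
  rw [← Finset.mul_prod_erase _ _ (Finset.mem_univ k), hrest,
    ← Finset.mul_prod_erase _ _ (Finset.mem_univ k), ← mul_assoc]
  congr 1
  have h1 : ((k.1 : ℂ) + 1) ≠ 0 := Nat.cast_add_one_ne_zero _
  have h2 : ((j k : ℂ) + 1) ≠ 0 := Nat.cast_add_one_ne_zero _
  have h3 : ((j k).factorial : ℂ) ≠ 0 := Nat.cast_ne_zero.2 (Nat.factorial_ne_zero _)
  simp only [Pi.add_apply, Pi.single_eq_same, Nat.factorial_succ, pow_succ]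
  push_cast
  field_simp

/-- Removing one part `k + 1` from a multiplicity vector of `m` that contains it is a bijection onto
the multiplicity vectors of `m - (k + 1)`; it multiplies the weight by `(k + 1) j_k`. The vectors not
containing `k + 1` contribute `0` on the left. -/
theorem sum_mul_cycleWeight {N m : ℕ} (hm : m ≤ N) (k : Fin N) :
    ∑ j ∈ multVecs N m, (((k.1 + 1) * j k : ℕ) : ℂ) * cycleWeight j =
      if k.1 < m then ∑ j ∈ multVecs N (m - (k.1 + 1)), cycleWeight j else 0 := by
  split_ifs with hk
  · symm
    have hm' : m - (k.1 + 1) ≤ N := by omega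
    refine Finset.sum_of_injOn (fun j => j + Pi.single k 1) ?_ ?_ ?_ ?_
    · intro a _ b _ hab
      exact add_right_cancel hab
    · intro j hj
      rw [Finset.mem_coe, mem_multVecs hm'] at hj
      rw [Finset.mem_coe, mem_multVecs hm, weight_add_single, hj]
      omega
    · intro j hj hnot
      have h0 : j k = 0 := by
        by_contra h0
        apply hnot
        have hj' : j - Pi.single k 1 + Pi.single k 1 = j := by
          ext i
          by_cases hi : i = k
          · subst hi
            simp only [Pi.add_apply, Pi.sub_apply, Pi.single_eq_same]
            omega
          · simp [hi]
        refine ⟨j - Pi.single k 1, ?_, hj'⟩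
        rw [mem_multVecs hm, ← hj', weight_add_single] at hj
        rw [Finset.mem_coe, mem_multVecs hm']
        omega
      simp [h0]
    · intro j _
      exact (cycleWeight_add_single j k).symm
  · refine Finset.sum_eq_zero fun j hj => ?_
    rw [mem_multVecs hm] at hj
    have h1 : (k.1 + 1) * j k ≤ m := hj ▸ Finset.single_le_sum
      (f := fun k : Fin N => (k.1 + 1) * j k) (fun _ _ => Nat.zero_le _) (Finset.mem_univ k)
    have h0 : j k = 0 := by
      by_contra h0
      have := Nat.le_mul_of_pos_right (k.1 + 1) (Nat.pos_of_ne_zero h0)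
      omega
    simp [h0]

/-- The total weight of the multiplicity vectors of `m` is `1`. The number `N` of available parts
stays fixed during the induction on `m`, so that all vectors have the same index type. -/
theorem sum_cycleWeight {N : ℕ} (m : ℕ) (hm : m ≤ N) :
    ∑ j ∈ multVecs N m, cycleWeight j = 1 := by
  induction m using Nat.strong_induction_on with
  | _ m ih =>
    rcases Nat.eq_zero_or_pos m with rfl | hpos
    · have : multVecs N 0 = {0} := by
        ext j
        rw [mem_multVecs hm, Finset.sum_eq_zero_iff]
        simp [funext_iff]
      simp [this, cycleWeight]
    · have key : (m : ℂ) * ∑ j ∈ multVecs N m, cycleWeight j = m := by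
        calc (m : ℂ) * ∑ j ∈ multVecs N m, cycleWeight j
            = ∑ j ∈ multVecs N m, ∑ k : Fin N,
                (((k.1 + 1) * j k : ℕ) : ℂ) * cycleWeight j := by
              rw [Finset.mul_sum]
              refine Finset.sum_congr rfl fun j hj => ?_
              rw [mem_multVecs hm] at hj
              rw [← Finset.sum_mul, ← Nat.cast_sum, hj]
          _ = ∑ k : Fin N, if k.1 < m then (1 : ℂ) else 0 := by
              rw [Finset.sum_comm]
              refine Finset.sum_congr rfl fun k _ => ?_
              rw [sum_mul_cycleWeight hm]
              split_ifs with hk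
              · exact ih _ (by omega) (by omega)
              · rfl
          _ = m := by
              rw [Fin.sum_univ_eq_sum_range (fun i => if i < m then (1 : ℂ) else 0),
                ← Finset.sum_filter]
              have : (Finset.range N).filter (· < m) = Finset.range m := by
                ext i; simp; omega
              simp [this]
      exact mul_left_cancel₀ (Nat.cast_ne_zero.2 hpos.ne') (key.trans (mul_one _).symm)

theorem cycleIndexCoeff_of_trace_pow {ι : Type*} [Fintype ι] [DecidableEq ι]
    (ρ : Matrix ι ι ℂ) (h : ∀ k : ℕ, (ρ ^ (k + 1)).trace = 1) (n : ℕ) :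
    cycleIndexCoeff ρ n = 1 := by
  rw [← sum_cycleWeight n le_rfl]
  unfold cycleIndexCoeff
  refine Finset.sum_bij (fun j _ k => (j k).1) ?_ ?_ ?_ ?_
  · intro j hj
    rw [mem_multVecs le_rfl]
    simpa using hj
  · intro a _ b _ hab
    funext k
    exact Fin.ext (congrFun hab k)
  · intro j hj
    have hj' := hj
    rw [mem_multVecs le_rfl] at hj'
    simp only [multVecs, Finset.mem_filter, Fintype.mem_piFinset, Finset.mem_range] at hj
    exact ⟨fun k => ⟨j k, hj.1 k⟩, by simpa using hj', rfl⟩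
  · intro j _
    simp [cycleWeight, h]

theorem cycleIndexCoeff_two {ι : Type*} [Fintype ι] [DecidableEq ι] (ρ : Matrix ι ι ℂ) :
    cycleIndexCoeff ρ 2 = (ρ.trace ^ 2 + (ρ ^ 2).trace) / 2 := by
  have hf : Finset.univ.filter
      (fun j : Fin 2 → Fin (2 + 1) => ∑ k : Fin 2, (k.1 + 1) * (j k).1 = 2) =
      {![2, 0], ![0, 1]} := by decide
  unfold cycleIndexCoeff
  rw [hf, Finset.sum_pair (by decide)]
  simp [Fin.prod_univ_two]
  ring

/-- A density matrix `ρ` is pure (i.e. `ρ = v·v†` for some unit vector `v`)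
if and only if `Z_n(ρ) = 1` for every `n ≥ 0`. -/
theorem pure_iff_cycle_index_coeffs_one {ι : Type*} [Fintype ι] [DecidableEq ι]
    (ρ : Matrix ι ι ℂ) (hρ : ρ.PosSemidef) (htr : ρ.trace = 1) :
    (∃ v : ι → ℂ, (∑ i : ι, ‖v i‖ ^ 2 = 1) ∧ ρ = Matrix.vecMulVec v (star v)) ↔
      ∀ n : ℕ, cycleIndexCoeff ρ n = 1 := by
  have hnorm : ∀ v : ι → ℂ, star v ⬝ᵥ v = ((∑ i, ‖v i‖ ^ 2 : ℝ) : ℂ) := fun v => by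
    simp [dotProduct, Complex.conj_mul']
  constructor
  · rintro ⟨v, hv, rfl⟩
    refine cycleIndexCoeff_of_trace_pow _ fun k => ?_
    have hid : IsIdempotentElem (Matrix.vecMulVec v (star v)) := by
      rw [IsIdempotentElem, Matrix.vecMulVec_mul_vecMulVec, hnorm, hv]
      simp
    rw [hid.pow_succ_eq, htr]
  · intro h
    have h2 := h 2
    rw [cycleIndexCoeff_two, htr] at h2
    have hsq : (ρ ^ 2).trace = 1 := by linear_combination 2 * h2
    obtain ⟨v, rfl⟩ := vecMulVec_of_trace_sq ρ hρ htr hsq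
    refine ⟨v, ?_, rfl⟩
    rw [Matrix.trace_vecMulVec, dotProduct_comm, hnorm] at htr
    exact_mod_cast htr
end

section
/- Let ρ be a density matrix, i.e., a positive semidefinite complex matrix indexed by a finite type with trace 1, and let n ≥ 0. Then the n-th cycle-index coefficient Z_n(ρ) is a real number satisfying 0 ≤ Z_n(ρ) ≤ 1. (Z_n(ρ) is the acceptance probability of the S_n-Bose symmetry test, namely tr(Π_sym ρ^{⊗n}) where Π_sym is the projection onto the symmetric subspace.) -/
/-!
Each power trace `tr (ρ ^ k)` with `k ≥ 1` is a sum `∑ λᵢ ^ k` over the eigenvalues of `ρ`, which are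
nonnegative and sum to `1`; so it is a real number in `[0, 1]`. Every term of the cycle index is
therefore nonnegative and at most its value at `tr (ρ ^ k) = 1`, and it remains to bound
`∑_j ∏_k 1 / (k ^ {j_k} j_k!)` by `1`. This holds because `n! / ∏_k (k ^ {j_k} j_k!)` counts the
permutations in `S_n` having `j_k` cycles of length `k` for every `k`, and these sets of permutations
are disjoint for distinct `j`.
-/

open ComplexOrder

/-- The cycle type (all lengths at least `2`) in `S_{m+1}` with `j k.succ` cycles of length
`k + 2`; fixed points, counted by `j 0`, are omitted as in `Equiv.Perm.cycleType`. -/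
def cycleMultiset {m : ℕ} (j : Fin (m + 1) → Fin (m + 2)) : Multiset ℕ :=
  ∑ k : Fin m, Multiset.replicate (j k.succ).1 (k.1 + 2)

lemma cycleMultiset_sum {m : ℕ} (j : Fin (m + 1) → Fin (m + 2)) :
    (cycleMultiset j).sum = ∑ k : Fin m, (k.1 + 2) * (j k.succ).1 := by
  unfold cycleMultiset
  rw [← Multiset.coe_sumAddMonoidHom, map_sum]
  simp [mul_comm]

lemma cycleMultiset_prod {m : ℕ} (j : Fin (m + 1) → Fin (m + 2)) :
    (cycleMultiset j).prod = ∏ k : Fin m, (k.1 + 2) ^ (j k.succ).1 := by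
  unfold cycleMultiset
  rw [Multiset.prod_sum]
  simp

lemma cycleMultiset_count {m : ℕ} (j : Fin (m + 1) → Fin (m + 2)) (k : Fin m) :
    (cycleMultiset j).count (k.1 + 2) = (j k.succ).1 := by
  unfold cycleMultiset
  rw [Multiset.count_sum']
  simp [Multiset.count_replicate, Fin.val_inj]

lemma exists_of_mem_cycleMultiset {m : ℕ} (j : Fin (m + 1) → Fin (m + 2)) {a : ℕ}
    (ha : a ∈ cycleMultiset j) : ∃ k : Fin m, k.1 + 2 = a := by
  unfold cycleMultiset at ha
  obtain ⟨k, -, hk⟩ := Multiset.mem_sum.1 ha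
  exact ⟨k, (Multiset.eq_of_mem_replicate hk).symm⟩

lemma cycleMultiset_prod_count {m : ℕ} (j : Fin (m + 1) → Fin (m + 2)) :
    ∏ a ∈ (cycleMultiset j).toFinset, ((cycleMultiset j).count a).factorial
      = ∏ k : Fin m, ((j k.succ).1).factorial := by
  have hinj : Function.Injective (fun k : Fin m => k.1 + 2) := fun a b h => by
    simpa [Fin.ext_iff] using h
  have hsub : (cycleMultiset j).toFinset ⊆ Finset.univ.image (fun k : Fin m => k.1 + 2) := by
    intro a ha
    obtain ⟨k, hk⟩ := exists_of_mem_cycleMultiset j (Multiset.mem_toFinset.1 ha)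
    exact Finset.mem_image.2 ⟨k, Finset.mem_univ _, hk⟩
  rw [Finset.prod_subset hsub, Finset.prod_image hinj.injOn]
  · simp only [cycleMultiset_count]
  · intro a _ ha
    rw [Multiset.mem_toFinset] at ha
    rw [Multiset.count_eq_zero_of_notMem ha, Nat.factorial_zero]

/-- The set of permutations of cycle type `j` has `n! / ∏ k ^ {j_k} j_k!` elements. -/
lemma card_cycleMultiset_mul {m : ℕ} (j : Fin (m + 1) → Fin (m + 2))
    (hj : ∑ k : Fin (m + 1), (k.1 + 1) * (j k).1 = m + 1) :
    (Finset.univ.filter (fun g : Equiv.Perm (Fin (m + 1)) =>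
        g.cycleType = cycleMultiset j)).card *
      ∏ k : Fin (m + 1), ((k.1 + 1) ^ (j k).1 * (j k).1.factorial) = (m + 1).factorial := by
  rw [Fin.sum_univ_succ] at hj
  have hs : (j 0).1 + (cycleMultiset j).sum = m + 1 := by
    rw [cycleMultiset_sum]
    simpa [add_assoc] using hj
  have h := Equiv.Perm.card_of_cycleType_mul_eq (Fin (m + 1)) (cycleMultiset j)
  have hcond : (cycleMultiset j).sum ≤ Fintype.card (Fin (m + 1)) ∧
      ∀ a ∈ cycleMultiset j, 2 ≤ a := by
    constructor
    · rw [Fintype.card_fin]; omega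
    · intro a ha
      obtain ⟨k, hk⟩ := exists_of_mem_cycleMultiset j ha
      omega
  have h0 : m + 1 - (cycleMultiset j).sum = (j 0).1 := by omega
  rw [if_pos hcond, Fintype.card_fin, h0, cycleMultiset_prod, cycleMultiset_prod_count] at h
  rw [← h, Fin.prod_univ_succ]
  simp [Finset.prod_mul_distrib, mul_assoc, add_assoc]

lemma cycleMultiset_injOn {m : ℕ} {j j' : Fin (m + 1) → Fin (m + 2)}
    (hj : ∑ k : Fin (m + 1), (k.1 + 1) * (j k).1 = m + 1)
    (hj' : ∑ k : Fin (m + 1), (k.1 + 1) * (j' k).1 = m + 1)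
    (h : cycleMultiset j = cycleMultiset j') : j = j' := by
  have hs : ∀ k : Fin m, (j k.succ).1 = (j' k.succ).1 := fun k => by
    rw [← cycleMultiset_count, ← cycleMultiset_count, h]
  have h0 : (j 0).1 = (j' 0).1 := by
    rw [Fin.sum_univ_succ] at hj hj'
    simp only [hs] at hj
    simp only [Fin.val_zero, zero_add, one_mul] at hj hj'
    omega
  funext k
  refine Fin.cases (Fin.ext h0) (fun k => Fin.ext (hs k)) k

/-- The cycle index of `S_n` at the all-ones point is at most `1`. -/
lemma cycleIndex_ones_le (n : ℕ) :
    ∑ j ∈ Finset.univ.filter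
      (fun j : Fin n → Fin (n + 1) => ∑ k : Fin n, (k.1 + 1) * (j k).1 = n),
      ∏ k : Fin n, (1 : ℝ) / (((k.1 + 1) ^ (j k).1 * Nat.factorial (j k).1 : ℕ) : ℝ) ≤ 1 := by
  classical
  rcases n with _ | m
  · simp
  set S := Finset.univ.filter
      (fun j : Fin (m + 1) → Fin (m + 2) => ∑ k : Fin (m + 1), (k.1 + 1) * (j k).1 = m + 1)
    with hS
  let F : (Fin (m + 1) → Fin (m + 2)) → Finset (Equiv.Perm (Fin (m + 1))) := fun j =>
    Finset.univ.filter (fun g => g.cycleType = cycleMultiset j)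
  have hterm : ∀ j ∈ S,
      ∏ k : Fin (m + 1), (1 : ℝ) / (((k.1 + 1) ^ (j k).1 * Nat.factorial (j k).1 : ℕ) : ℝ)
        = ((F j).card : ℝ) / ((m + 1).factorial : ℝ) := by
    intro j hj
    have hc := card_cycleMultiset_mul j (Finset.mem_filter.1 hj).2
    have hpos : (∏ k : Fin (m + 1), ((k.1 + 1) ^ (j k).1 * (j k).1.factorial) : ℕ) ≠ 0 :=
      Finset.prod_ne_zero_iff.2 fun k _ => by positivity
    rw [Finset.prod_div_distrib, Finset.prod_const_one, ← Nat.cast_prod, div_eq_div_iff, one_mul]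
    · rw [← Nat.cast_mul, hc]
    · exact_mod_cast hpos
    · positivity
  rw [Finset.sum_congr rfl hterm, ← Finset.sum_div, div_le_one (by positivity), ← Nat.cast_sum]
  have hdisj : (S : Set (Fin (m + 1) → Fin (m + 2))).PairwiseDisjoint F := by
    intro j hj j' hj' hne
    refine Finset.disjoint_left.2 fun g hg hg' => hne ?_
    exact cycleMultiset_injOn (Finset.mem_filter.1 hj).2 (Finset.mem_filter.1 hj').2
      ((Finset.mem_filter.1 hg).2.symm.trans (Finset.mem_filter.1 hg').2)
  rw [← Finset.card_biUnion hdisj]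
  have := Finset.card_le_univ (S.biUnion F)
  rw [Fintype.card_perm, Fintype.card_fin] at this
  exact_mod_cast this

lemma trace_pow_eq_sum_eigenvalues {ι : Type*} [Fintype ι] [DecidableEq ι]
    {ρ : Matrix ι ι ℂ} (h : ρ.IsHermitian) (k : ℕ) :
    (ρ ^ k).trace = ((∑ i, h.eigenvalues i ^ k : ℝ) : ℂ) := by
  conv_lhs => rw [h.spectral_theorem, ← map_pow, Matrix.diagonal_pow, Unitary.conjStarAlgAut_apply,
    Matrix.trace_mul_cycle, Unitary.coe_star_mul_self, one_mul, Matrix.trace_diagonal]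
  simp

/-- The power traces of a density matrix are real numbers in `[0, 1]`. -/
lemma trace_pow_mem_unit_interval {ι : Type*} [Fintype ι] [DecidableEq ι]
    (ρ : Matrix ι ι ℂ) (hρ : ρ.PosSemidef) (htr : ρ.trace = 1) (k : ℕ) :
    ∃ t : ℝ, (ρ ^ (k + 1)).trace = (t : ℂ) ∧ 0 ≤ t ∧ t ≤ 1 := by
  have h0 := hρ.eigenvalues_nonneg
  have h1 : ∑ i, hρ.1.eigenvalues i = 1 := by
    have := trace_pow_eq_sum_eigenvalues hρ.1 1
    simp only [pow_one, htr] at this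
    exact_mod_cast this.symm
  refine ⟨_, trace_pow_eq_sum_eigenvalues hρ.1 (k + 1),
    Finset.sum_nonneg fun i _ => pow_nonneg (h0 i) _, ?_⟩
  rw [← h1]
  refine Finset.sum_le_sum fun i _ => pow_le_of_le_one (h0 i) ?_ k.succ_ne_zero
  rw [← h1]
  exact Finset.single_le_sum (fun i _ => h0 i) (Finset.mem_univ i)

/-- For a density matrix `ρ` and every `n ≥ 0`, the cycle-index coefficient
`Z_n(ρ)` (the acceptance probability of the `S_n`-Bose symmetry test) is a real number with
`0 ≤ Z_n(ρ) ≤ 1`. -/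
theorem cycle_index_coeff_mem_unit_interval {ι : Type*} [Fintype ι] [DecidableEq ι]
    (ρ : Matrix ι ι ℂ) (hρ : ρ.PosSemidef) (htr : ρ.trace = 1) (n : ℕ) :
    ∃ r : ℝ, cycleIndexCoeff ρ n = (r : ℂ) ∧ 0 ≤ r ∧ r ≤ 1 := by
  choose t ht ht0 ht1 using trace_pow_mem_unit_interval ρ hρ htr
  refine ⟨∑ j ∈ Finset.univ.filter
      (fun j : Fin n → Fin (n + 1) => ∑ k : Fin n, (k.1 + 1) * (j k).1 = n),
      ∏ k : Fin n, t k.1 ^ (j k).1 / (((k.1 + 1) ^ (j k).1 * Nat.factorial (j k).1 : ℕ) : ℝ),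
    ?_, ?_, ?_⟩
  · simp only [cycleIndexCoeff, ht]
    push_cast
    rfl
  · refine Finset.sum_nonneg fun j _ => Finset.prod_nonneg fun k _ => ?_
    exact div_nonneg (pow_nonneg (ht0 _) _) (Nat.cast_nonneg _)
  · refine le_trans (Finset.sum_le_sum fun j _ => Finset.prod_le_prod (fun k _ => ?_)
      fun k _ => ?_) (cycleIndex_ones_le n)
    · exact div_nonneg (pow_nonneg (ht0 _) _) (Nat.cast_nonneg _)
    · exact div_le_div_of_nonneg_right (pow_le_one₀ (ht0 _) (ht1 _)) (Nat.cast_nonneg _)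
end
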